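/- arXiv:1203.4066 — 2 statements merged into one kernel-verified Lean document; each statement's English description precedes it below -/
import Mathlib

section
/- Let s ≥ 0 be an integer and b = 2^(2^s). Then 𝔖_b(n) = 𝔖_b(n + b) for every positive integer n; i.e., the sequence of last non-zero digits of n^n in base b is purely periodic with period b. -/
/-- The last non-zero digit of `n` in base `b`: if `n = b^r * n'` with `b ∤ n'`,
this is `n' % b`. -/
def lastNonzeroDigit (b n : ℕ) : ℕ := (n / b ^ (Nat.maxPowDiv b n)) % b

/-- `𝔖_b(n)`: the last non-zero digit of `n^n` in base `b`. -/
def lnz (b n : ℕ) : ℕ := lastNonzeroDigit b (n ^ n)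

/-!
Write `b = q ^ k` and `n = q ^ a * m` with `m` coprime to `q`. The power of `q` dividing `n ^ n` is
`q ^ (a * n)`, so the last non-zero digit of `n ^ n` is `q ^ (a * n % k) * m ^ n` modulo `b`.

If `a < k`, adding to `n` a multiple `t` of `b` keeps `a` and changes `m` by a multiple of
`q ^ (k - a)`. Raising to the power `q ^ a`, which divides `n`, lifts this congruence to one modulo
`q ^ k`, so `m ^ n` is unchanged modulo `b`. The digit is then unchanged as soon as `t` is also a
multiple of `k` (for the factor `q ^ (a * n % k)`) and of `φ b` (for the exponent of `m`). Moreover,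
the digit is `1` whenever `k` and `φ b` divide `n`. For `q = 2` and `k = 2 ^ s`, both `k` and `φ b`
divide `b`, so the first argument applies with `t = b` if `b ∤ n`, and the second to `n` and `n + b`
if `b ∣ n`.
-/

open scoped Nat

theorem pow_dvd_pow_pow_sub_pow_pow {R : Type*} [CommRing R] {q j : ℕ} {x y : R} (hj : j ≠ 0)
    (h : (q : R) ^ j ∣ x - y) (a : ℕ) : (q : R) ^ (j + a) ∣ x ^ q ^ a - y ^ q ^ a := by
  induction a with
  | zero => simpa using h
  | succ a ih =>
    have hq : (q : R) ∣ x ^ q ^ a - y ^ q ^ a := (dvd_pow_self _ (by omega)).trans ih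
    rw [pow_succ q a, pow_mul, pow_mul, ← (Commute.all _ _).geom_sum₂_mul, ← add_assoc, pow_succ']
    exact mul_dvd_mul (dvd_geom_sum₂_self hq) ih

theorem pow_pow_modEq_pow_pow {q j x y : ℕ} (hj : j ≠ 0) (h : x ≡ y [MOD q ^ j]) (a : ℕ) :
    x ^ q ^ a ≡ y ^ q ^ a [MOD q ^ (j + a)] := by
  rw [Nat.modEq_iff_dvd] at h ⊢
  push_cast at h ⊢
  exact pow_dvd_pow_pow_sub_pow_pow hj h a

theorem pow_modEq_one_of_totient_dvd {x n e : ℕ} (hx : x.Coprime n) (he : φ n ∣ e) :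
    x ^ e ≡ 1 [MOD n] := by
  obtain ⟨c, rfl⟩ := he
  simpa only [pow_mul, one_pow] using (Nat.ModEq.pow_totient hx).pow c

theorem totient_two_pow_dvd_two_pow (k : ℕ) : φ (2 ^ k) ∣ 2 ^ k := by
  cases k with
  | zero => simp
  | succ k =>
    rw [Nat.totient_prime_pow_succ Nat.prime_two, Nat.add_one_sub_one, mul_one]
    exact pow_dvd_pow 2 k.le_succ

theorem lastNonzeroDigit_base_pow_mul {b m : ℕ} (hb : 1 < b) (hm : ¬ b ∣ m) (r : ℕ) :
    lastNonzeroDigit b (b ^ r * m) = m % b := by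
  have hm₀ : m ≠ 0 := fun h ↦ hm (h ▸ dvd_zero b)
  have hval : padicValNat b (b ^ r * m) = r := by
    rw [padicValNat_base_pow_mul hb hm₀, padicValNat.eq_zero_of_not_dvd hm, zero_add]
  change b ^ r * m / b ^ padicValNat b (b ^ r * m) % b = m % b
  rw [hval, Nat.mul_div_cancel_left _ (by positivity)]

section BasePow

variable {q k a m n : ℕ}

theorem lnz_base_pow (hq : 1 < q) (hk : k ≠ 0) (hm : m.Coprime q) (hn : n = q ^ a * m) :
    lnz (q ^ k) n = q ^ (a * n % k) * m ^ n % q ^ k := by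
  have hpow : n ^ n = (q ^ k) ^ (a * n / k) * (q ^ (a * n % k) * m ^ n) := by
    rw [← mul_assoc, ← pow_mul, ← pow_add, Nat.div_add_mod, pow_mul, ← mul_pow, ← hn]
  have hndvd : ¬ q ^ k ∣ q ^ (a * n % k) * m ^ n := fun h ↦ by
    have hle : k ≤ a * n % k :=
      (Nat.pow_dvd_pow_iff_le_right hq).1 ((hm.symm.pow k n).dvd_of_dvd_mul_right h)
    exact hle.not_gt (Nat.mod_lt _ (Nat.pos_of_ne_zero hk))
  rw [lnz, hpow, lastNonzeroDigit_base_pow_mul (Nat.one_lt_pow hk hq) hndvd]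

theorem lnz_base_pow_eq_one (hq : 1 < q) (hk : k ≠ 0) (hm : m.Coprime q) (hn : n = q ^ a * m)
    (hkn : k ∣ n) (hφn : φ (q ^ k) ∣ n) : lnz (q ^ k) n = 1 := by
  rw [lnz_base_pow hq hk hm hn, Nat.mod_eq_zero_of_dvd (hkn.mul_left a), pow_zero, one_mul,
    pow_modEq_one_of_totient_dvd (hm.pow_right k) hφn, Nat.mod_eq_of_lt (Nat.one_lt_pow hk hq)]

theorem lnz_base_pow_add {t : ℕ} (hq : 1 < q) (hm : m.Coprime q) (hn : n = q ^ a * m)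
    (hak : a < k) (hbt : q ^ k ∣ t) (hkt : k ∣ t) (hφt : φ (q ^ k) ∣ t) :
    lnz (q ^ k) (n + t) = lnz (q ^ k) n := by
  obtain ⟨c, hc⟩ := hbt
  obtain ⟨j, rfl⟩ := Nat.exists_eq_add_of_lt hak
  have hj : j + 1 ≠ 0 := j.succ_ne_zero
  have hk : a + j + 1 ≠ 0 := by omega
  set m' := m + q ^ (j + 1) * c with hm'_def
  have hm' : m'.Coprime q := by
    rwa [hm'_def, pow_succ', mul_assoc, Nat.coprime_add_mul_left_left]
  have hn' : n + t = q ^ a * m' := by rw [hn, hc]; ring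
  have hdigit : a * (n + t) % (a + j + 1) = a * n % (a + j + 1) := by
    rw [mul_add, Nat.add_mod, Nat.mod_eq_zero_of_dvd (hkt.mul_left a), add_zero, Nat.mod_mod]
  have hmm' : m' ≡ m [MOD q ^ (j + 1)] := by simp [hm'_def, Nat.ModEq]
  have hpow : m' ^ n ≡ m ^ n [MOD q ^ (a + j + 1)] := by
    have hlift := (pow_pow_modEq_pow_pow hj hmm' a).pow m
    rwa [← pow_mul, ← pow_mul, ← hn, show j + 1 + a = a + j + 1 by ring] at hlift
  have hpow_add : m' ^ (n + t) ≡ m ^ n [MOD q ^ (a + j + 1)] := by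
    simpa only [pow_add _ n, mul_one] using
      hpow.mul (pow_modEq_one_of_totient_dvd (hm'.pow_right _) hφt)
  rw [lnz_base_pow hq hk hm hn, lnz_base_pow hq hk hm' hn', hdigit]
  exact hpow_add.mul_left _

end BasePow

theorem stmt_17 (s : ℕ) :
    ∀ n : ℕ, 0 < n → lnz (2 ^ 2 ^ s) n = lnz (2 ^ 2 ^ s) (n + 2 ^ 2 ^ s) := by
  intro n hn
  have hk : 2 ^ s ≠ 0 := by positivity
  have hkb : 2 ^ s ∣ 2 ^ 2 ^ s := pow_dvd_pow 2 Nat.lt_two_pow_self.le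
  have hφb : φ (2 ^ 2 ^ s) ∣ 2 ^ 2 ^ s := totient_two_pow_dvd_two_pow (2 ^ s)
  have lnz_eq_one {l : ℕ} (hl : l ≠ 0) (hbl : 2 ^ 2 ^ s ∣ l) : lnz (2 ^ 2 ^ s) l = 1 := by
    obtain ⟨a, m, hm, hlm⟩ := Nat.exists_eq_two_pow_mul_odd hl
    exact lnz_base_pow_eq_one one_lt_two hk hm.coprime_two_right hlm (hkb.trans hbl) (hφb.trans hbl)
  by_cases hbn : 2 ^ 2 ^ s ∣ n
  · rw [lnz_eq_one hn.ne' hbn, lnz_eq_one (by omega) (hbn.add dvd_rfl)]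
  · obtain ⟨a, m, hm, hnm⟩ := Nat.exists_eq_two_pow_mul_odd hn.ne'
    have ha : a < 2 ^ s := by
      by_contra! hka
      exact hbn (hnm ▸ (pow_dvd_pow 2 hka).mul_right m)
    exact (lnz_base_pow_add one_lt_two hm.coprime_two_right hnm ha dvd_rfl hkb hφb).symm
end

section
/- Let p be a prime and t ≥ 1 an integer. The sequence 𝔖_{p^t}(n) of last non-zero digits of n^n in base p^t is eventually periodic if and only if p = 2 and t = 2^s for some integer s ≥ 0; moreover, in that case the sequence is purely periodic (𝔖_{p^t}(n) = 𝔖_{p^t}(n + p^t) for all n ≥ 1). -/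
/-!
For `n = p ^ v * m` with `p ∤ m`, the last non-zero digit of `n ^ n` in base `p ^ t` records exactly
the residue of `v * n` modulo `t` and a residue of `m ^ n` modulo a positive power of `p`.

Let `T = p ^ a * m` be an eventual period and compare `n = p ^ v * u` with `n + T` for large `v`,
so that `n + T` has valuation `a`. If moreover `t ∣ T`, which may be assumed, the first residue
gives `a * n ≡ v * n [MOD t]`; taking `u = 1` and `v ≡ a + 1 [MOD t]`, `t` divides `p ^ v`. The
second residue gives `m ^ (u + m) = u ^ u` in `ZMod p` for every `u` prime to `p`. The left side
depends only on `u` modulo `p - 1`, so `u = 1` and `u = 2 * p - 1` give `1 = -1`, hence `p = 2`.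

Conversely, let `p = 2` and `t ∣ 2 ^ t`. If `2 ^ t ∣ n`, both residues are trivial. Otherwise
adding `2 ^ t` keeps `v`, changes `v * n` by a multiple of `t` and `m` by `2 ^ (t - v)`, and raising
to the power `2 ^ v ∣ n` promotes the latter to a congruence modulo `2 ^ t`.
-/

theorem mul_pow_dvd_pow_sub_pow {R : Type*} [CommRing R] {q : ℕ} {d x y : R} (hq : (q : R) ∣ d)
    (h : d ∣ x - y) (k : ℕ) : d * (q : R) ^ k ∣ x ^ q ^ k - y ^ q ^ k := by
  induction k with
  | zero => simpa using h
  | succ k ih =>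
    have hq' : (q : R) ∣ x ^ q ^ k - y ^ q ^ k := (hq.mul_right _).trans ih
    rw [pow_succ q k, pow_mul, pow_mul, ← geom_sum₂_mul, pow_succ', mul_left_comm]
    exact mul_dvd_mul (dvd_geom_sum₂_self hq') ih

theorem pow_pow_modEq_pow_pow_s18 {q d x y : ℕ} (hq : q ∣ d) (h : x ≡ y [MOD d]) (k : ℕ) :
    x ^ q ^ k ≡ y ^ q ^ k [MOD d * q ^ k] := by
  rw [Nat.modEq_iff_dvd] at h ⊢
  exact_mod_cast mul_pow_dvd_pow_sub_pow (Int.natCast_dvd_natCast.2 hq) h k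

theorem pow_two_pow_modEq_one {m : ℕ} (hm : ¬2 ∣ m) (t : ℕ) : m ^ 2 ^ t ≡ 1 [MOD 2 ^ t] := by
  have hm1 : m ≡ 1 [MOD 2] := Nat.two_dvd_ne_zero.1 hm
  simpa only [one_pow] using (pow_pow_modEq_pow_pow_s18 dvd_rfl hm1 t).of_mul_left 2

theorem padicValNat_pow_mul_of_not_dvd {b A : ℕ} (hb : 1 < b) (hA : ¬b ∣ A) (i : ℕ) :
    padicValNat b (b ^ i * A) = i := by
  have hA0 : A ≠ 0 := fun h ↦ hA (h ▸ dvd_zero b)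
  rw [padicValNat_base_pow_mul hb hA0, padicValNat.eq_zero_of_not_dvd hA, zero_add]

theorem pow_dvd_pow_mul_iff_le {b A : ℕ} (hb : 1 < b) (hA : ¬b ∣ A) {i j : ℕ} :
    b ^ j ∣ b ^ i * A ↔ j ≤ i := by
  have hA0 : A ≠ 0 := fun h ↦ hA (h ▸ dvd_zero b)
  rw [Nat.pow_dvd_iff_le_padicValNat hb.ne' (mul_ne_zero (pow_pos (by lia) i).ne' hA0),
    padicValNat_pow_mul_of_not_dvd hb hA]

theorem pow_mul_modEq_pow_mul_iff {b t i j A B : ℕ} (hb : 1 < b) (hi : i < t) (hj : j < t)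
    (hA : ¬b ∣ A) (hB : ¬b ∣ B) :
    b ^ i * A ≡ b ^ j * B [MOD b ^ t] ↔ i = j ∧ A ≡ B [MOD b ^ (t - i)] := by
  have cancel : b ^ i * A ≡ b ^ i * B [MOD b ^ t] ↔ A ≡ B [MOD b ^ (t - i)] := by
    rw [← pow_mul_pow_sub b hi.le, Nat.ModEq.mul_left_cancel_iff' (pow_pos (by lia) i).ne']
  constructor
  · intro h
    have dvd_iff {k : ℕ} (hk : k ≤ t) : k ≤ i ↔ k ≤ j := by
      rw [← pow_dvd_pow_mul_iff_le hb hA, ← pow_dvd_pow_mul_iff_le hb hB]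
      exact (h.of_dvd (pow_dvd_pow b hk)).dvd_iff dvd_rfl
    obtain rfl : i = j := le_antisymm ((dvd_iff hi.le).1 le_rfl) ((dvd_iff hj.le).2 le_rfl)
    exact ⟨rfl, cancel.1 h⟩
  · rintro ⟨rfl, h⟩
    exact cancel.2 h

theorem eq_two_of_forall_pow_eq_self_pow {p : ℕ} [hp : Fact p.Prime] {x : ZMod p} {k : ℕ}
    (h : ∀ u : ℕ, ¬p ∣ u → x ^ (u + k) = (u : ZMod p) ^ u) : p = 2 := by
  have hx_pow : x ^ (1 + k) = 1 := by simpa using h 1 hp.out.not_dvd_one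
  have hx : x ≠ 0 := by
    rintro rfl
    simp at hx_pow
  have hpos := hp.out.pos
  have hcast : ((2 * (p - 1) + 1 : ℕ) : ZMod p) = -1 := by
    rw [← add_eq_zero_iff_eq_neg, ← Nat.cast_succ, ZMod.natCast_eq_zero_iff]
    exact ⟨2, by lia⟩
  have hndvd : ¬p ∣ 2 * (p - 1) + 1 := by
    rw [← ZMod.natCast_eq_zero_iff, hcast, neg_eq_zero]
    exact one_ne_zero
  have hneg : (-1 : ZMod p) = 1 := calc
    (-1 : ZMod p) = (-1) ^ (2 * (p - 1) + 1) := (Odd.neg_one_pow ⟨p - 1, rfl⟩).symm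
    _ = x ^ (2 * (p - 1) + 1 + k) := by rw [h _ hndvd, hcast]
    _ = (x ^ (p - 1)) ^ 2 * x ^ (1 + k) := by ring
    _ = 1 := by rw [ZMod.pow_card_sub_one_eq_one hx, hx_pow, one_pow, one_mul]
  rwa [neg_one_eq_one_iff, ZMod.ringChar_zmod_n] at hneg

theorem lastNonzeroDigit_pow_mul {b m : ℕ} (hb : 1 < b) (hm : ¬b ∣ m) (r : ℕ) :
    lastNonzeroDigit b (b ^ r * m) = m % b := by
  change b ^ r * m / b ^ padicValNat b (b ^ r * m) % b = m % b
  rw [padicValNat_pow_mul_of_not_dvd hb hm, Nat.mul_div_cancel_left m (pow_pos (by lia) r)]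

theorem lastNonzeroDigit_base_pow {b t A : ℕ} (hb : 1 < b) (ht : 0 < t) (hA : ¬b ∣ A) (e : ℕ) :
    lastNonzeroDigit (b ^ t) (b ^ e * A) = b ^ (e % t) * A % b ^ t := by
  have hndvd : ¬b ^ t ∣ b ^ (e % t) * A := by
    rw [pow_dvd_pow_mul_iff_le hb hA, not_le]
    exact Nat.mod_lt e ht
  rw [← lastNonzeroDigit_pow_mul (one_lt_pow₀ hb ht.ne') hndvd (e / t), ← pow_mul, ← mul_assoc,
    ← pow_add, Nat.div_add_mod]

theorem lastNonzeroDigit_base_pow_eq_iff {b t A B : ℕ} (hb : 1 < b) (ht : 0 < t) (hA : ¬b ∣ A)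
    (hB : ¬b ∣ B) (e f : ℕ) :
    lastNonzeroDigit (b ^ t) (b ^ e * A) = lastNonzeroDigit (b ^ t) (b ^ f * B) ↔
      e ≡ f [MOD t] ∧ A ≡ B [MOD b ^ (t - e % t)] := by
  rw [lastNonzeroDigit_base_pow hb ht hA, lastNonzeroDigit_base_pow hb ht hB]
  exact pow_mul_modEq_pow_mul_iff hb (Nat.mod_lt e ht) (Nat.mod_lt f ht) hA hB

theorem lnz_prime_pow_eq_iff {p t v w m k : ℕ} (hp : p.Prime) (ht : 0 < t) (hm : ¬p ∣ m)
    (hk : ¬p ∣ k) :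
    lnz (p ^ t) (p ^ v * m) = lnz (p ^ t) (p ^ w * k) ↔
      v * (p ^ v * m) ≡ w * (p ^ w * k) [MOD t] ∧
        m ^ (p ^ v * m) ≡ k ^ (p ^ w * k) [MOD p ^ (t - v * (p ^ v * m) % t)] := by
  unfold lnz
  rw [mul_pow _ m, mul_pow _ k, ← pow_mul, ← pow_mul]
  exact lastNonzeroDigit_base_pow_eq_iff hp.one_lt ht (mt hp.dvd_of_dvd_pow hm)
    (mt hp.dvd_of_dvd_pow hk) _ _

theorem apply_add_mul_eq_of_forall_ge {α : Type*} {f : ℕ → α} {T n₀ : ℕ}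
    (h : ∀ n ≥ n₀, f (n + T) = f n) (k : ℕ) : ∀ n ≥ n₀, f (n + k * T) = f n := by
  intro n hn
  induction k with
  | zero => rw [zero_mul, add_zero]
  | succ k ih => rw [Nat.succ_mul, ← add_assoc, h _ (hn.trans (n.le_add_right _)), ih]

section Necessity

variable {p t T n₀ : ℕ}

theorem modEq_and_modEq_of_lnz_add_eq {a v m u : ℕ} (hp : p.Prime) (ht : 0 < t) (hav : a < v)
    (hm : ¬p ∣ m) (hu : ¬p ∣ u)
    (h : lnz (p ^ t) (p ^ v * u + p ^ a * m) = lnz (p ^ t) (p ^ v * u)) :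
    a * (p ^ v * u + p ^ a * m) ≡ v * (p ^ v * u) [MOD t] ∧
      m ^ (p ^ v * u + p ^ a * m) ≡ u ^ (p ^ v * u) [MOD p] := by
  have hdvd : p ∣ p ^ (v - a) * u := (dvd_pow_self p (Nat.sub_ne_zero_of_lt hav)).mul_right u
  have hsum : p ^ v * u + p ^ a * m = p ^ a * (p ^ (v - a) * u + m) := by
    rw [mul_add, ← mul_assoc, pow_mul_pow_sub p hav.le]
  rw [hsum] at h ⊢
  obtain ⟨hexp, hdigit⟩ :=
    (lnz_prime_pow_eq_iff hp ht (mt (Nat.dvd_add_right hdvd).1 hm) hu).1 h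
  have hbase : m ≡ p ^ (v - a) * u + m [MOD p] := (Nat.add_modEq_right_iff.2 hdvd).symm
  exact ⟨hexp, (hbase.pow _).trans
    (hdigit.of_dvd (dvd_pow_self p (Nat.sub_ne_zero_of_lt (Nat.mod_lt _ ht))))⟩

theorem exists_eq_prime_pow_of_lnz_eventually_periodic (hp : p.Prime) (ht : 0 < t) (hT : 0 < T)
    (h : ∀ n ≥ n₀, lnz (p ^ t) (n + T) = lnz (p ^ t) n) : ∃ s, t = p ^ s := by
  obtain ⟨a, m, hm, htT⟩ := Nat.exists_eq_pow_mul_and_not_dvd (mul_pos ht hT).ne' p hp.ne_one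
  obtain ⟨v, hv⟩ : ∃ v, v = a + 1 + t * n₀ := ⟨_, rfl⟩
  have hn₀v : n₀ ≤ v := hv ▸ le_add_left (Nat.le_mul_of_pos_left n₀ ht)
  have hn₀ : n₀ ≤ p ^ v * 1 := by
    rw [mul_one]
    exact hn₀v.trans (Nat.lt_pow_self hp.one_lt).le
  have hper := apply_add_mul_eq_of_forall_ge h t _ hn₀
  rw [htT] at hper
  have hexp := (modEq_and_modEq_of_lnz_add_eq hp ht (by lia) hm hp.not_dvd_one hper).1
  have hcongr : a * p ^ v + 0 ≡ a * p ^ v + p ^ v [MOD t] := calc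
    a * p ^ v + 0 ≡ a * p ^ v + t * (a * T) [MOD t] := by simp
    _ = a * (p ^ v * 1 + p ^ a * m) := by rw [← htT]; ring
    _ ≡ v * (p ^ v * 1) [MOD t] := hexp
    _ = a * p ^ v + p ^ v + t * (n₀ * p ^ v) := by nth_rw 1 [hv]; ring
    _ ≡ a * p ^ v + p ^ v [MOD t] := by simp
  have hdvd : t ∣ p ^ v := Nat.modEq_zero_iff_dvd.1 (hcongr.add_left_cancel' _).symm
  obtain ⟨s, -, hs⟩ := (Nat.dvd_prime_pow hp).1 hdvd
  exact ⟨s, hs⟩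

theorem eq_two_of_lnz_eventually_periodic (hp : p.Prime) (ht : 0 < t) (hT : 0 < T)
    (h : ∀ n ≥ n₀, lnz (p ^ t) (n + T) = lnz (p ^ t) n) : p = 2 := by
  have : Fact p.Prime := ⟨hp⟩
  obtain ⟨a, m, hm, rfl⟩ := Nat.exists_eq_pow_mul_and_not_dvd hT.ne' p hp.ne_one
  refine eq_two_of_forall_pow_eq_self_pow (x := (m : ZMod p)) (k := m) fun u hu ↦ ?_
  have hu0 : 0 < u := Nat.pos_of_ne_zero fun hu0 ↦ hu (hu0 ▸ dvd_zero p)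
  obtain ⟨v, hav, hn₀v⟩ : ∃ v, a < v ∧ n₀ ≤ v := ⟨a + 1 + n₀, by lia, by lia⟩
  have hn₀ : n₀ ≤ p ^ v * u :=
    (hn₀v.trans (Nat.lt_pow_self hp.one_lt).le).trans (Nat.le_mul_of_pos_right _ hu0)
  have hdigit := (modEq_and_modEq_of_lnz_add_eq hp ht hav hm hu (h _ hn₀)).2
  simpa [pow_add, pow_mul] using (ZMod.natCast_eq_natCast_iff _ _ p).2 hdigit

end Necessity

section Sufficiency

variable {t n : ℕ}

theorem lnz_eq_lnz_one_of_two_pow_dvd (ht : t ∣ 2 ^ t) (hn0 : n ≠ 0) (hn : 2 ^ t ∣ n) :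
    lnz (2 ^ t) n = lnz (2 ^ t) 1 := by
  have ht0 : 0 < t := Nat.pos_of_dvd_of_pos ht (by positivity)
  have hexp : t ∣ n := ht.trans hn
  obtain ⟨v, m, hm, rfl⟩ := Nat.exists_eq_pow_mul_and_not_dvd hn0 2 (by simp)
  have hdigit : m ^ (2 ^ v * m) ≡ 1 [MOD 2 ^ t] := by
    obtain ⟨c, hc⟩ := hn
    rw [hc, pow_mul]
    simpa only [one_pow] using (pow_two_pow_modEq_one hm t).pow c
  refine (lnz_prime_pow_eq_iff (w := 0) (k := 1) Nat.prime_two ht0 hm (by simp)).2 ⟨?_, ?_⟩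
  · rw [zero_mul]
    exact Nat.modEq_zero_iff_dvd.2 (hexp.mul_left v)
  · rw [one_pow]
    exact hdigit.of_dvd (pow_dvd_pow 2 (Nat.sub_le _ _))

theorem add_two_pow_sub_pow_modEq {v m : ℕ} (hvt : v < t) (hm : ¬2 ∣ m) :
    (m + 2 ^ (t - v)) ^ (2 ^ v * m + 2 ^ t) ≡ m ^ (2 ^ v * m) [MOD 2 ^ t] := by
  have hd : 2 ∣ 2 ^ (t - v) := dvd_pow_self 2 (Nat.sub_ne_zero_of_lt hvt)
  have hlift : (m + 2 ^ (t - v)) ^ 2 ^ v ≡ m ^ 2 ^ v [MOD 2 ^ t] := by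
    simpa only [pow_sub_mul_pow 2 hvt.le] using
      pow_pow_modEq_pow_pow_s18 hd (Nat.add_modEq_right : m + 2 ^ (t - v) ≡ m [MOD 2 ^ (t - v)]) v
  have hone := pow_two_pow_modEq_one (mt (Nat.dvd_add_left hd).1 hm) t
  rw [pow_add, pow_mul, pow_mul]
  simpa only [mul_one] using (hlift.pow m).mul hone

theorem lnz_add_two_pow (ht : t ∣ 2 ^ t) (hn0 : n ≠ 0) :
    lnz (2 ^ t) (n + 2 ^ t) = lnz (2 ^ t) n := by
  by_cases hn : 2 ^ t ∣ n
  · rw [lnz_eq_lnz_one_of_two_pow_dvd ht hn0 hn,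
      lnz_eq_lnz_one_of_two_pow_dvd ht (by lia) (dvd_add hn dvd_rfl)]
  obtain ⟨v, m, hm, rfl⟩ := Nat.exists_eq_pow_mul_and_not_dvd hn0 2 (by simp)
  have hvt : v < t := by rwa [pow_dvd_pow_mul_iff_le one_lt_two hm, not_le] at hn
  have hm' : ¬2 ∣ m + 2 ^ (t - v) :=
    mt (Nat.dvd_add_left (dvd_pow_self 2 (Nat.sub_ne_zero_of_lt hvt))).1 hm
  have hsum : 2 ^ v * m + 2 ^ t = 2 ^ v * (m + 2 ^ (t - v)) := by
    rw [mul_add, pow_mul_pow_sub 2 hvt.le]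
  have hexp : v * (2 ^ v * m + 2 ^ t) ≡ v * (2 ^ v * m) [MOD t] :=
    (Nat.add_modEq_left_iff.2 ht).mul_left v
  have hdigit := add_two_pow_sub_pow_modEq hvt hm
  rw [hsum] at hexp hdigit ⊢
  exact (lnz_prime_pow_eq_iff Nat.prime_two (by lia) hm' hm).2
    ⟨hexp, hdigit.of_dvd (pow_dvd_pow 2 (Nat.sub_le _ _))⟩

end Sufficiency

theorem stmt_18 (p t : ℕ) (hp : p.Prime) (ht : 1 ≤ t) :
    ((∃ T : ℕ, 0 < T ∧ ∃ n₀ : ℕ, ∀ n ≥ n₀, lnz (p ^ t) (n + T) = lnz (p ^ t) n) ↔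
      (p = 2 ∧ ∃ s : ℕ, t = 2 ^ s)) ∧
    ((p = 2 ∧ ∃ s : ℕ, t = 2 ^ s) →
      ∀ n : ℕ, 1 ≤ n → lnz (p ^ t) (n + p ^ t) = lnz (p ^ t) n) := by
  have purely_periodic : (p = 2 ∧ ∃ s : ℕ, t = 2 ^ s) →
      ∀ n : ℕ, 1 ≤ n → lnz (p ^ t) (n + p ^ t) = lnz (p ^ t) n := by
    rintro ⟨rfl, s, rfl⟩ n hn
    exact lnz_add_two_pow (pow_dvd_pow 2 Nat.lt_two_pow_self.le) (Nat.one_le_iff_ne_zero.1 hn)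
  refine ⟨⟨?_, fun h ↦ ⟨p ^ t, pow_pos hp.pos t, 1, purely_periodic h⟩⟩, purely_periodic⟩
  rintro ⟨T, hT, n₀, hper⟩
  obtain rfl := eq_two_of_lnz_eventually_periodic hp ht hT hper
  exact ⟨rfl, exists_eq_prime_pow_of_lnz_eventually_periodic hp ht hT hper⟩
end
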